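/- arXiv:1501.02304 — 2 statements merged into one kernel-verified Lean document; each statement's English description precedes it below -/
import Mathlib

section
/- Let σ be a positive Borel measure on ℝ^d finite on dyadic cubes, let 1 < s < ∞, let {α_Q}_{Q∈𝒟} ⊂ [0,∞), and let Q₀ ∈ 𝒟. Define A₁ := ∫_{Q₀} ( ∑_{Q⊆Q₀} (α_Q / σ(Q)) 1_Q )^s dσ and A₂ := ∑_{Q⊆Q₀} α_Q ( σ(Q)^{-1} ∑_{Q'⊆Q} α_{Q'} )^{s−1}. Then A₁ ≤ c(s) A₂, where c(s) = s for 1 < s ≤ 2 and c(s) = ( s(s−1)⋯(s−k) )^{(s−1)/(s−k−1)} for 2 < s < ∞, where k is the smallest integer greater than s − 2. -/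
open MeasureTheory ENNReal NNReal Set

noncomputable section

/-- The dyadic cube `Q = 2^{-k}(m + [0,1)^d)` in `ℝ^d`, indexed by `(k, m) ∈ ℤ × ℤ^d`. -/
def dyadicCube (d : ℕ) (Q : ℤ × (Fin d → ℤ)) : Set (Fin d → ℝ) :=
  {x | ∀ i, (Q.2 i : ℝ) * (2 : ℝ) ^ (-Q.1) ≤ x i ∧ x i < ((Q.2 i : ℝ) + 1) * (2 : ℝ) ^ (-Q.1)}

/-- The constant `c(s)`: `c(s) = s` for `1 < s ≤ 2` and
`c(s) = (s(s-1)⋯(s-k))^{(s-1)/(s-k-1)}` for `2 < s < ∞`, where `k = ⌈s-2⌉` is the smallest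
integer greater than `s - 2`. -/
def lemmaConst (s : ℝ) : ℝ :=
  if s ≤ 2 then s
  else (∏ j ∈ Finset.range (⌈s - 2⌉₊ + 1), (s - (j : ℝ))) ^
    ((s - 1) / (s - (⌈s - 2⌉₊ : ℝ) - 1))


lemma aux_pow_add (a S : ℝ≥0∞) (r : ℝ) (hr : 1 ≤ r) :
    (a + S) ^ r ≤ ENNReal.ofReal r * (a * (a + S) ^ (r - 1)) + S ^ r := by
  have hr0 : ENNReal.ofReal r ≠ 0 := by simp; linarith
  by_cases hS : S = ∞
  · subst hS; rw [ENNReal.top_rpow_of_pos (by linarith : 0 < r)]; simp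
  by_cases ha : a = ∞
  · subst ha
    have : (∞ + S) ^ (r-1) ≠ 0 := by
      simp; linarith
    rw [ENNReal.top_mul this, ENNReal.mul_top hr0]; simp
  lift S to ℝ≥0 using hS
  lift a to ℝ≥0 using ha
  have h1 : (0:ℝ) ≤ r - 1 := by linarith
  have h2 : (0:ℝ) ≤ r := by linarith
  rw [← ENNReal.coe_add, ← ENNReal.coe_rpow_of_nonneg _ h1, ← ENNReal.coe_rpow_of_nonneg _ h2,
    ← ENNReal.coe_rpow_of_nonneg _ h2, ENNReal.ofReal]
  norm_cast
  rw [← NNReal.coe_le_coe]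
  push_cast
  rw [Real.coe_toNNReal _ h2]
  have ha : (0:ℝ) ≤ a := a.2
  have hS : (0:ℝ) ≤ S := S.2
  generalize (a:ℝ) = a at *
  generalize (S:ℝ) = S at *
  rcases (add_nonneg ha hS).eq_or_lt with h | hy
  · have : a = 0 := by linarith
    have : S = 0 := by linarith
    subst_vars; simp
  set y := a + S with hy'
  have hb := one_add_mul_self_le_rpow_one_add (s := S / y - 1) (by
    have : 0 ≤ S / y := by positivity
    linarith) hr
  rw [show 1 + (S / y - 1) = S / y by ring, Real.div_rpow hS hy.le,
    le_div_iff₀ (by positivity)] at hb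
  have e : y ^ r = y * y ^ (r-1) := by
    rw [← Real.rpow_one_add' hy.le (by linarith)]; congr 1; ring
  have e2 : (1 + r * (S / y - 1)) * y ^ r = y^r - r * (a * y ^ (r-1)) := by
    rw [e]; field_simp
    rw [show a = y - S by rw [hy']; ring]; ring
  linarith

lemma aux_chain {ι : Type*} (lev : ι → ℤ) (b : ι → ℝ≥0∞) (r : ℝ) (hr : 1 ≤ r) (S : Finset ι) :
    (∑ i ∈ S, b i) ^ r ≤ ENNReal.ofReal r *
      ∑ i ∈ S, b i * (∑ j ∈ S, if lev i ≤ lev j then b j else 0) ^ (r - 1) := by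
  classical
  induction S using Finset.induction_on_min_value lev with
  | empty => simp; linarith
  | insert a s has hle ih =>
    rw [Finset.sum_insert has, Finset.sum_insert has]
    refine (aux_pow_add _ _ r hr).trans ?_
    rw [mul_add]
    gcongr ?_ + ?_
    · gcongr
      rw [Finset.sum_insert has, if_pos le_rfl]
      gcongr with i hi
      rw [if_pos (hle i hi)]
    · refine ih.trans ?_
      refine mul_le_mul_right (Finset.sum_le_sum fun i hi => ?_) _
      refine mul_le_mul_right (ENNReal.rpow_le_rpow ?_ (by linarith)) _
      exact Finset.sum_le_sum_of_subset (Finset.subset_insert _ _)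

section
variable {X : Type*} {ι : Type*} [Fintype ι]

open Classical in
noncomputable def auxT (E : ι → Set X) (a : ι → ℝ≥0∞) (i : ι) (x : X) : ℝ≥0∞ :=
  ∑ j, if E j ⊆ E i then a j * (E j).indicator 1 x else 0

open Classical in
noncomputable def auxF (E : ι → Set X) (a : ι → ℝ≥0∞) (i : ι) : ℝ≥0∞ :=
  ∑ j, if E i ⊆ E j then a j else 0

open Classical in
noncomputable def auxD [MeasurableSpace X] (σ : Measure X) (E : ι → Set X) (a : ι → ℝ≥0∞) (i : ι) : ℝ≥0∞ :=
  ∑ j, if E j ⊆ E i then a j * σ (E j) else 0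

open Classical in
lemma aux_gen (E : ι → Set X) (lev : ι → ℤ) (a : ι → ℝ≥0∞)
    (hn : ∀ i j x, x ∈ E i → x ∈ E j → lev i ≤ lev j → E j ⊆ E i)
    (p : ι → Prop) (r : ℝ) (hr : 1 ≤ r) (x : X) :
    (∑ j, if p j then a j * (E j).indicator 1 x else 0) ^ r ≤
      ENNReal.ofReal r * ∑ j, if p j then a j * (E j).indicator 1 x * auxT E a j x ^ (r-1) else 0 := by
  refine (aux_chain lev _ r hr Finset.univ).trans ?_
  gcongr with j _
  split_ifs with hp
  · by_cases hx : x ∈ E j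
    · refine mul_le_mul_right (ENNReal.rpow_le_rpow ?_ (by linarith)) _
      unfold auxT
      gcongr with l _
      by_cases hl : x ∈ E l
      · by_cases h : lev j ≤ lev l
        · rw [if_pos h, if_pos (hn j l x hx hl h)]
          split_ifs <;> simp
        · simp [h]
      · simp [hl]
    · simp [hx]
  · simp

lemma aux_ptw (E : ι → Set X) (lev : ι → ℤ) (a : ι → ℝ≥0∞)
    (hn : ∀ i j x, x ∈ E i → x ∈ E j → lev i ≤ lev j → E j ⊆ E i)
    (s : ℝ) (k : ℕ) (hk : 1 ≤ s - k) (x : X) :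
    (∑ j, a j * (E j).indicator 1 x) ^ s ≤
      ENNReal.ofReal (∏ j ∈ Finset.range (k+1), (s - (j:ℝ))) *
       ∑ i, a i * (E i).indicator 1 x * auxF E a i ^ k * auxT E a i x ^ (s - k - 1) := by
  classical
  induction k with
  | zero =>
    have := aux_gen E lev a hn (fun _ => True) s (by simpa using hk) x
    simpa using this
  | succ k ih =>
    push_cast at hk
    refine (ih (by linarith)).trans ?_
    rw [Finset.prod_range_succ _ (k+1), ENNReal.ofReal_mul (Finset.prod_nonneg (fun i hi => by
      have : (i:ℝ) ≤ k := by exact_mod_cast Nat.lt_succ_iff.mp (Finset.mem_range.mp hi)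
      linarith)), mul_assoc]
    gcongr
    have h1 : ∀ i, a i * (E i).indicator 1 x * auxF E a i ^ k * auxT E a i x ^ (s - k - 1) ≤
       a i * (E i).indicator 1 x * auxF E a i ^ k * (ENNReal.ofReal (s - k - 1) * ∑ j, if E j ⊆ E i then a j * (E j).indicator 1 x * auxT E a j x ^ (s - k - 1 - 1) else 0) := by
      intro i
      gcongr
      exact aux_gen E lev a hn (fun j => E j ⊆ E i) (s-k-1) (by linarith) x
    refine (Finset.sum_le_sum fun i _ => h1 i).trans ?_
    have e : s - ((k+1 : ℕ) : ℝ) = s - k - 1 := by push_cast; ring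
    rw [e]
    calc _ = ENNReal.ofReal (s - k - 1) * ∑ j, ∑ i, (if E j ⊆ E i then a i * (E i).indicator 1 x * auxF E a i ^ k else 0) * (a j * (E j).indicator 1 x * auxT E a j x ^ (s - k - 1 - 1)) := by
          rw [Finset.sum_comm, Finset.mul_sum]
          refine Finset.sum_congr rfl fun i _ => ?_
          rw [Finset.mul_sum, Finset.mul_sum, Finset.mul_sum]
          refine Finset.sum_congr rfl fun j _ => ?_
          split_ifs
          · ring
          · simp
      _ ≤ _ := by
          gcongr with j _
          rw [← Finset.sum_mul]
          have : ∑ i, (if E j ⊆ E i then a i * (E i).indicator 1 x * auxF E a i ^ k else 0) ≤ auxF E a j ^ (k+1) := by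
            rw [pow_succ']
            have hFj : auxF E a j * auxF E a j ^ k = ∑ i, (if E j ⊆ E i then a i else 0) * auxF E a j ^ k := by
              rw [← Finset.sum_mul]; rfl
            rw [hFj]
            gcongr with i _
            split_ifs with h
            · have hF : auxF E a i ≤ auxF E a j := by
                unfold auxF
                gcongr with l _
                by_cases h2 : E i ⊆ E l
                · rw [if_pos h2, if_pos (h.trans h2)]
                · simp [h2]
              gcongr
              calc _ ≤ a i * 1 := by
                    gcongr
                    exact Set.indicator_le_self' (by simp) x
                _ = _ := mul_one _
            · simp
          calc _ ≤ auxF E a j ^ (k+1) * (a j * (E j).indicator 1 x * auxT E a j x ^ (s - k - 1 - 1)) := by gcongr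
            _ = _ := by ring

lemma aux_holder (f g : ι → ℝ≥0∞) {p q : ℝ} (hp : 0 ≤ p) (hq : 0 ≤ q) (hpq : p + q = 1) :
    ∑ i, f i ^ p * g i ^ q ≤ (∑ i, f i) ^ p * (∑ i, g i) ^ q := by
  let _ : MeasurableSpace ι := ⊤
  have := ENNReal.lintegral_mul_norm_pow_le (μ := Measure.count) (f := f) (g := g)
    (measurable_from_top.aemeasurable) (measurable_from_top.aemeasurable) hp hq hpq
  simpa [lintegral_count, tsum_fintype] using this

lemma aux_fin [MeasurableSpace X] (σ : Measure X) (E : ι → Set X) (lev : ι → ℤ) (a : ι → ℝ≥0∞)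
    (hE : ∀ i, MeasurableSet (E i)) (hσ : ∀ i, σ (E i) ≠ ∞) (ha : ∀ i, a i ≠ ∞)
    (s : ℝ) (hs : 1 < s) :
    ∫⁻ x, (∑ j, a j * (E j).indicator 1 x) ^ s ∂σ ≠ ∞ := by
  have hb : ∀ x, (∑ j, a j * (E j).indicator 1 x) ^ s ≤
      (∑ j, a j) ^ s * ∑ j, (E j).indicator 1 x := by
    intro x
    by_cases h : ∃ i, x ∈ E i
    · obtain ⟨i, hi⟩ := h
      calc _ ≤ (∑ j, a j) ^ s * 1 := by
            rw [mul_one]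
            gcongr with j _
            calc _ ≤ a j * 1 := by
                    gcongr
                    exact Set.indicator_le_self' (by simp) x
                _ = _ := mul_one _
        _ ≤ _ := by
            gcongr
            calc (1:ℝ≥0∞) = (E i).indicator 1 x := by simp [hi]
              _ ≤ _ := Finset.single_le_sum (f := fun j => (E j).indicator (1 : X → ℝ≥0∞) x) (fun _ _ => zero_le) (Finset.mem_univ i)
    · push Not at h
      simp [h]; linarith
  refine ne_of_lt ((lintegral_mono hb).trans_lt ?_)
  rw [lintegral_const_mul _ (Finset.measurable_sum _ fun j _ => measurable_one.indicator (hE j)),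
    lintegral_finsetSum _ (fun j _ => measurable_one.indicator (hE j))]
  refine ENNReal.mul_lt_top ?_ ?_
  · exact ENNReal.rpow_lt_top_of_nonneg (by linarith) (ENNReal.sum_ne_top.2 fun j _ => ha j)
  · refine ENNReal.sum_lt_top.2 fun j _ => ?_
    rw [lintegral_indicator_one (hE j)]
    exact (hσ j).lt_top

lemma aux_measT [MeasurableSpace X] (E : ι → Set X) (a : ι → ℝ≥0∞)
    (hE : ∀ i, MeasurableSet (E i)) (i : ι) : Measurable (auxT E a i) := by
  classical
  unfold auxT
  refine Finset.measurable_sum _ fun j _ => ?_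
  split_ifs
  · exact (measurable_one.indicator (hE j)).const_mul _
  · exact measurable_const

lemma aux_intT [MeasurableSpace X] (σ : Measure X) (E : ι → Set X) (a : ι → ℝ≥0∞)
    (hE : ∀ i, MeasurableSet (E i)) (i : ι) : ∫⁻ x, auxT E a i x ∂σ = auxD σ E a i := by
  classical
  unfold auxT auxD
  rw [lintegral_finsetSum]
  · refine Finset.sum_congr rfl fun j _ => ?_
    split_ifs
    · rw [lintegral_const_mul _ (measurable_one.indicator (hE j)), lintegral_indicator_one (hE j)]
    · simp
  · intro j _
    split_ifs
    · exact (measurable_one.indicator (hE j)).const_mul _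
    · exact measurable_const

lemma aux_jensen [MeasurableSpace X] (σ : Measure X) (E : ι → Set X) (a : ι → ℝ≥0∞)
    (hE : ∀ i, MeasurableSet (E i)) (hσ : ∀ i, σ (E i) ≠ ∞) (p : ℝ) (hp : 0 < p) (hp1 : p ≤ 1)
    (i : ι) :
    ∫⁻ x, (E i).indicator 1 x * auxT E a i x ^ p ∂σ ≤
      σ (E i) * (auxD σ E a i / σ (E i)) ^ p := by
  have h := ENNReal.lintegral_mul_norm_pow_le (μ := σ) (f := auxT E a i)
    (g := (E i).indicator 1) (aux_measT E a hE i).aemeasurable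
    (measurable_one.indicator (hE i)).aemeasurable hp.le (sub_nonneg.2 hp1) (by ring)
  have e : ∀ x, (E i).indicator 1 x * auxT E a i x ^ p ≤
      auxT E a i x ^ p * (E i).indicator (1 : X → ℝ≥0∞) x ^ (1 - p) := by
    intro x
    by_cases hx : x ∈ E i <;> simp [hx]
  refine (lintegral_mono e).trans (h.trans ?_)
  rw [aux_intT σ E a hE, lintegral_indicator_one (hE i)]
  by_cases h0 : σ (E i) = 0
  · have : auxD σ E a i = 0 := by
      unfold auxD
      refine Finset.sum_eq_zero fun j _ => ?_
      split_ifs with hj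
      · simp [measure_mono_null hj h0]
      · rfl
    simp [this, hp]
  · rw [ENNReal.div_rpow_of_nonneg _ _ hp.le, ENNReal.rpow_sub _ _ h0 (hσ i), ENNReal.rpow_one]
    simp only [div_eq_mul_inv]
    apply le_of_eq; ring

lemma aux_main [MeasurableSpace X] (σ : Measure X) (E : ι → Set X) (lev : ι → ℤ) (a : ι → ℝ≥0∞)
    (hE : ∀ i, MeasurableSet (E i)) (hσ : ∀ i, σ (E i) ≠ ∞) (ha : ∀ i, a i ≠ ∞)
    (hn : ∀ i j x, x ∈ E i → x ∈ E j → lev i ≤ lev j → E j ⊆ E i)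
    (s : ℝ) (hs : 1 < s) (k : ℕ) (hk : 0 < s - k - 1) (hk1 : s - k - 1 ≤ 1) :
    ∫⁻ x, (∑ j, a j * (E j).indicator 1 x) ^ s ∂σ ≤
      ENNReal.ofReal ((∏ j ∈ Finset.range (k+1), (s - (j:ℝ))) ^ ((s - 1) / (s - k - 1))) *
      ∑ i, a i * σ (E i) * (auxD σ E a i / σ (E i)) ^ (s - 1) := by
  classical
  set A := ∫⁻ x, (∑ j, a j * (E j).indicator 1 x) ^ s ∂σ with hA
  have hAfin : A ≠ ∞ := aux_fin σ E lev a hE hσ ha s hs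
  set C := ∏ j ∈ Finset.range (k+1), (s - (j:ℝ)) with hC
  have hC0 : 0 ≤ C := Finset.prod_nonneg (fun i hi => by
      have : (i:ℝ) ≤ k := by exact_mod_cast Nat.lt_succ_iff.mp (Finset.mem_range.mp hi)
      linarith)
  set B := fun i => auxD σ E a i / σ (E i) with hB
  set G := ∑ i, a i * σ (E i) * B i ^ (s-1) with hG
  set θ := (s - k - 1) / (s - 1) with hθ
  have hs1 : 0 < s - 1 := by linarith
  have hθ0 : 0 < θ := div_pos hk hs1
  have hkn : (0:ℝ) ≤ k := Nat.cast_nonneg k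
  have hθ1 : 0 ≤ 1 - θ := by
    rw [hθ, sub_nonneg, div_le_one hs1]; linarith
  have step1 : A ≤ ENNReal.ofReal C *
      ∑ i, a i * σ (E i) * auxF E a i ^ k * B i ^ (s - k - 1) := by
    refine (lintegral_mono fun x => aux_ptw E lev a hn s k (by linarith) x).trans ?_
    have hm : ∀ i, Measurable fun x => a i * (E i).indicator 1 x * auxF E a i ^ k * auxT E a i x ^ (s - k - 1) := by
      intro i
      exact ((((measurable_one.indicator (hE i)).const_mul _).mul_const _).mul
        ((aux_measT E a hE i).pow_const _))
    rw [lintegral_const_mul _ (Finset.measurable_sum _ fun j _ => hm j),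
      lintegral_finsetSum _ (fun j _ => hm j)]
    gcongr with i _
    calc _ = ∫⁻ x, (a i * auxF E a i ^ k) * ((E i).indicator 1 x * auxT E a i x ^ (s - k - 1)) ∂σ := by
            congr 1; ext x; ring
      _ = (a i * auxF E a i ^ k) * ∫⁻ x, ((E i).indicator 1 x * auxT E a i x ^ (s - k - 1)) ∂σ :=
            lintegral_const_mul _ ((measurable_one.indicator (hE i)).mul
              ((aux_measT E a hE i).pow_const _))
      _ ≤ (a i * auxF E a i ^ k) * (σ (E i) * B i ^ (s - k - 1)) := by
            gcongr
            exact aux_jensen σ E a hE hσ _ hk hk1 i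
      _ = _ := by ring
  have step2 : ∑ i, a i * σ (E i) * auxF E a i ^ k * B i ^ (s - k - 1) ≤
      G ^ θ * (∑ i, a i * σ (E i) * auxF E a i ^ (s - 1)) ^ (1 - θ) := by
    refine le_trans (le_of_eq ?_) (aux_holder _ _ hθ0.le hθ1 (by ring))
    refine Finset.sum_congr rfl fun i _ => ?_
    rw [ENNReal.mul_rpow_of_nonneg _ _ hθ0.le, ENNReal.mul_rpow_of_nonneg _ _ hθ1,
      ← ENNReal.rpow_mul, ← ENNReal.rpow_mul,
      show (s - 1) * θ = s - k - 1 by rw [hθ]; field_simp,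
      show (s - 1) * (1 - θ) = k by rw [hθ]; field_simp; ring, ENNReal.rpow_natCast]
    have : a i * σ (E i) = (a i * σ (E i)) ^ θ * (a i * σ (E i)) ^ (1 - θ) := by
      rw [← ENNReal.rpow_add_of_nonneg _ _ hθ0.le hθ1]; simp
    nth_rewrite 1 [this]
    ring
  have step3 : ∑ i, a i * σ (E i) * auxF E a i ^ (s - 1) ≤ A := by
    have hm : ∀ i, Measurable fun x => (a i * auxF E a i ^ (s-1)) * (E i).indicator (1 : X → ℝ≥0∞) x :=
      fun i => (measurable_one.indicator (hE i)).const_mul _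
    calc _ = ∫⁻ x, ∑ i, (a i * auxF E a i ^ (s-1)) * (E i).indicator 1 x ∂σ := by
          rw [lintegral_finsetSum _ (fun j _ => hm j)]
          refine Finset.sum_congr rfl fun i _ => ?_
          rw [lintegral_const_mul _ (measurable_one.indicator (hE i)), lintegral_indicator_one (hE i)]
          ring
      _ ≤ A := by
          refine lintegral_mono fun x => ?_
          calc _ ≤ ∑ i, (a i * (E i).indicator 1 x) * (∑ j, a j * (E j).indicator 1 x) ^ (s-1) := by
                refine Finset.sum_le_sum fun i _ => ?_
                by_cases hx : x ∈ E i
                · simp only [hx, indicator_of_mem, Pi.one_apply, mul_one]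
                  refine mul_le_mul_right (ENNReal.rpow_le_rpow ?_ hs1.le) _
                  unfold auxF
                  gcongr with j _
                  split_ifs with h
                  · simp [h hx]
                  · simp
                · simp [hx]
            _ = _ := by
                rw [← Finset.sum_mul]
                nth_rewrite 1 [← ENNReal.rpow_one (∑ i, a i * (E i).indicator 1 x)]
                rw [← ENNReal.rpow_add_of_nonneg _ _ zero_le_one hs1.le]
                congr 1; ring
  have hfin : A ≤ ENNReal.ofReal C * (G ^ θ * A ^ (1 - θ)) :=
    step1.trans (by gcongr; exact step2.trans (by gcongr))
  by_cases hA0 : A = 0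
  · simp [hA0]
  have hA' : A ^ θ ≤ ENNReal.ofReal C * G ^ θ := by
    have hne : A ^ (1 - θ) ≠ 0 := by
      simp [ENNReal.rpow_eq_zero_iff, hA0, hAfin]
    have hne' : A ^ (1 - θ) ≠ ∞ := ENNReal.rpow_ne_top_of_nonneg hθ1 hAfin
    rw [← ENNReal.mul_le_mul_iff_left hne hne', ← ENNReal.rpow_add_of_nonneg _ _ hθ0.le hθ1]
    simpa [mul_assoc] using hfin
  have h2 := ENNReal.rpow_le_rpow hA' (inv_nonneg.2 hθ0.le)
  rw [ENNReal.rpow_rpow_inv hθ0.ne', ENNReal.mul_rpow_of_nonneg _ _ (inv_nonneg.2 hθ0.le),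
    ENNReal.rpow_rpow_inv hθ0.ne', ENNReal.ofReal_rpow_of_nonneg hC0 (inv_nonneg.2 hθ0.le)] at h2
  rwa [hθ, inv_div] at h2
end

lemma aux_nested (d : ℕ) (P Q : ℤ × (Fin d → ℤ)) (x : Fin d → ℝ) (hP : x ∈ dyadicCube d P)
    (hQ : x ∈ dyadicCube d Q) (h : P.1 ≤ Q.1) : dyadicCube d Q ⊆ dyadicCube d P := by
  obtain ⟨n, hn⟩ := Int.eq_ofNat_of_zero_le (sub_nonneg.2 h)
  have e : (2:ℝ) ^ (-P.1) = ((2 ^ n : ℤ) : ℝ) * 2 ^ (-Q.1) := by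
    rw [show -P.1 = (n:ℤ) + -Q.1 by omega, zpow_add₀ (by norm_num)]
    simp
  have hpos : (0:ℝ) < 2 ^ (-Q.1) := by positivity
  intro y hy i
  obtain ⟨p1, p2⟩ := hP i
  obtain ⟨q1, q2⟩ := hQ i
  obtain ⟨y1, y2⟩ := hy i
  rw [e, ← mul_assoc] at p1 p2 ⊢
  rw [← mul_assoc]
  have h1 : P.2 i * 2 ^ n < Q.2 i + 1 := by
    have := lt_of_mul_lt_mul_right (p1.trans_lt q2) hpos.le
    exact_mod_cast this
  have h2 : Q.2 i < (P.2 i + 1) * 2 ^ n := by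
    have := lt_of_mul_lt_mul_right (q1.trans_lt p2) hpos.le
    exact_mod_cast this
  have h1' : (P.2 i : ℝ) * ((2 ^ n : ℤ) : ℝ) ≤ Q.2 i := by exact_mod_cast Int.lt_add_one_iff.1 h1
  have h2' : (Q.2 i : ℝ) + 1 ≤ ((P.2 i : ℝ) + 1) * ((2 ^ n : ℤ) : ℝ) := by exact_mod_cast h2
  exact ⟨(mul_le_mul_of_nonneg_right h1' hpos.le).trans y1,
    y2.trans_le (mul_le_mul_of_nonneg_right h2' hpos.le)⟩

lemma aux_measCube (d : ℕ) (P : ℤ × (Fin d → ℤ)) : MeasurableSet (dyadicCube d P) := by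
  have : dyadicCube d P = Set.univ.pi fun i =>
      Set.Ico ((P.2 i : ℝ) * (2 : ℝ) ^ (-P.1)) (((P.2 i : ℝ) + 1) * (2 : ℝ) ^ (-P.1)) := by
    ext x; simp [dyadicCube]
  rw [this]
  exact MeasurableSet.univ_pi fun i => measurableSet_Ico

lemma aux_const (s : ℝ) (hs : 1 < s) : lemmaConst s =
    (∏ j ∈ Finset.range (⌈s - 2⌉₊ + 1), (s - (j : ℝ))) ^
    ((s - 1) / (s - (⌈s - 2⌉₊ : ℝ) - 1)) := by
  unfold lemmaConst
  split_ifs with h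
  · have : ⌈s - 2⌉₊ = 0 := Nat.ceil_eq_zero.2 (by linarith)
    have h1 : s - 1 ≠ 0 := by linarith
    simp [this, div_self h1]
  · rfl

/-- The estimate `A₁ ≤ c(s) A₂` of Lemma 2.1 (with the convention that
terms with `σ(Q) = 0` vanish). -/
theorem A1_le_A2
    (d : ℕ) (hd : 0 < d) (σ : Measure (Fin d → ℝ))
    (hσ : ∀ Q, σ (dyadicCube d Q) ≠ ∞)
    (s : ℝ) (hs : 1 < s)
    (α : ℤ × (Fin d → ℤ) → ℝ≥0)
    (Q₀ : ℤ × (Fin d → ℤ)) :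
    (∫⁻ x in dyadicCube d Q₀,
        (∑' Q : {Q : ℤ × (Fin d → ℤ) // dyadicCube d Q ⊆ dyadicCube d Q₀},
          (if σ (dyadicCube d Q.1) = 0 then 0
            else (α Q.1 : ℝ≥0∞) / σ (dyadicCube d Q.1)) *
            (dyadicCube d Q.1).indicator 1 x) ^ s ∂σ) ≤
      ENNReal.ofReal (lemmaConst s) *
        ∑' Q : {Q : ℤ × (Fin d → ℤ) // dyadicCube d Q ⊆ dyadicCube d Q₀},
          (α Q.1 : ℝ≥0∞) *
            (if σ (dyadicCube d Q.1) = 0 then 0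
              else (σ (dyadicCube d Q.1))⁻¹ *
                ∑' Q' : {Q' : ℤ × (Fin d → ℤ) // dyadicCube d Q' ⊆ dyadicCube d Q.1},
                  (α Q'.1 : ℝ≥0∞)) ^ (s - 1) := by
  classical
  have hk2 : 0 < s - (⌈s - 2⌉₊ : ℝ) - 1 := by
    by_cases h : s ≤ 2
    · have : ⌈s - 2⌉₊ = 0 := Nat.ceil_eq_zero.2 (by linarith)
      simp [this]; linarith
    · have := Nat.ceil_lt_add_one (a := s - 2) (by linarith)
      linarith
  have hk1 : s - (⌈s - 2⌉₊ : ℝ) - 1 ≤ 1 := by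
    have := Nat.le_ceil (s - 2)
    linarith
  rw [aux_const s hs]
  set c := ENNReal.ofReal ((∏ j ∈ Finset.range (⌈s - 2⌉₊ + 1), (s - (j : ℝ))) ^
    ((s - 1) / (s - (⌈s - 2⌉₊ : ℝ) - 1))) with hc
  set ι := {Q : ℤ × (Fin d → ℤ) // dyadicCube d Q ⊆ dyadicCube d Q₀} with hι
  let E : ι → Set (Fin d → ℝ) := fun Q => dyadicCube d Q.1
  let a : ι → ℝ≥0∞ := fun Q => if σ (dyadicCube d Q.1) = 0 then 0
            else (α Q.1 : ℝ≥0∞) / σ (dyadicCube d Q.1)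
  have ha : ∀ i, a i ≠ ∞ := by
    intro i
    simp only [a]
    split_ifs with h
    · simp
    · exact ENNReal.div_ne_top ENNReal.coe_ne_top h
  have haσ : ∀ i, a i * σ (E i) ≤ α i.1 := by
    intro i
    simp only [a, E]
    split_ifs with h
    · simp
    · rw [ENNReal.div_mul_cancel h (hσ _)]
  have hE : ∀ i, MeasurableSet (E i) := fun i => aux_measCube d i.1
  refine (setLIntegral_le_lintegral _ _).trans ?_
  have hsup : ∀ x, (∑' Q : ι, a Q * (E Q).indicator 1 x) ^ s =
      ⨆ S : Finset ι, (∑ Q ∈ S, a Q * (E Q).indicator 1 x) ^ s := by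
    intro x
    rw [ENNReal.tsum_eq_iSup_sum]
    exact (ENNReal.orderIsoRpow s (by linarith)).map_iSup _
  change ∫⁻ x, (∑' Q : ι, a Q * (E Q).indicator 1 x) ^ s ∂σ ≤ _
  simp_rw [hsup]
  rw [lintegral_iSup_directed]
  rotate_left
  · intro S
    exact ((Finset.measurable_sum _ fun j _ =>
      (measurable_one.indicator (hE j)).const_mul _).pow_const _).aemeasurable
  · refine Monotone.directed_le fun S S' h x => ?_
    exact ENNReal.rpow_le_rpow (Finset.sum_le_sum_of_subset h) (by linarith)
  refine iSup_le fun S => ?_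
  have hmain := aux_main (ι := S) σ (fun i => E i.1) (fun i => i.1.1.1) (fun i => a i.1)
    (fun i => hE _) (fun i => hσ _) (fun i => ha _)
    (fun i j x hi hj h => aux_nested d _ _ x hi hj h) s hs ⌈s - 2⌉₊ hk2 hk1
  have e : ∀ x, ∑ Q ∈ S, a Q * (E Q).indicator 1 x = ∑ j : S, a j.1 * (E j.1).indicator 1 x :=
    fun x => (Finset.sum_coe_sort S (fun Q => a Q * (E Q).indicator 1 x)).symm
  simp_rw [e]
  refine hmain.trans ?_
  refine mul_le_mul_right ?_ _
  let B : ι → ℝ≥0∞ := fun Q => if σ (dyadicCube d Q.1) = 0 then 0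
              else (σ (dyadicCube d Q.1))⁻¹ *
                ∑' Q' : {Q' : ℤ × (Fin d → ℤ) // dyadicCube d Q' ⊆ dyadicCube d Q.1},
                  (α Q'.1 : ℝ≥0∞)
  have hD : ∀ i : S, auxD σ (fun i : S => E i.1) (fun i => a i.1) i ≤
      ∑' Q' : {Q' : ℤ × (Fin d → ℤ) // dyadicCube d Q' ⊆ dyadicCube d i.1.1},
                  (α Q'.1 : ℝ≥0∞) := by
    intro i
    unfold auxD
    rw [← Finset.sum_filter]
    calc _ ≤ ∑ j : S with E j.1 ⊆ E i.1, (α j.1.1 : ℝ≥0∞) := by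
          exact Finset.sum_le_sum fun j _ => haσ j.1
      _ = ∑' j : {j : S // E j.1 ⊆ E i.1}, (α j.1.1.1 : ℝ≥0∞) := by
          rw [tsum_fintype]
          exact Finset.sum_subtype _ (by simp) (fun j : S => (α j.1.1 : ℝ≥0∞))
      _ ≤ _ := by
          let φ : {j : S // E j.1 ⊆ E i.1} →
            {Q' : ℤ × (Fin d → ℤ) // dyadicCube d Q' ⊆ dyadicCube d i.1.1} :=
            fun j => ⟨j.1.1.1, j.2⟩
          have hφ : Function.Injective φ := by
            intro j l h
            have := congrArg Subtype.val h
            exact Subtype.ext (Subtype.ext (Subtype.ext this))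
          exact ENNReal.tsum_comp_le_tsum_of_injective hφ (fun Q' => (α Q'.1 : ℝ≥0∞))
  calc _ ≤ ∑ i : S, (α i.1.1 : ℝ≥0∞) * B i.1 ^ (s - 1) := by
        refine Finset.sum_le_sum fun i _ => ?_
        by_cases h0 : σ (E i.1) = 0
        · simp [h0]
        · refine mul_le_mul' (haσ _) (ENNReal.rpow_le_rpow ?_ (by linarith))
          have h0' : σ (dyadicCube d i.1.1) ≠ 0 := h0
          simp only [B, if_neg h0']
          rw [ENNReal.div_eq_inv_mul]
          exact mul_le_mul_right (hD i) _
    _ = ∑ i ∈ S, (α i.1 : ℝ≥0∞) * B i ^ (s - 1) :=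
        Finset.sum_coe_sort S (fun i => (α i.1 : ℝ≥0∞) * B i ^ (s - 1))
    _ ≤ _ := ENNReal.sum_le_tsum S

end
end

section
/- Let σ be a positive Borel measure on ℝ^d finite on dyadic cubes, let 1 < s < ∞, let {α_Q}_{Q∈𝒟} ⊂ [0,∞), and let Q₀ ∈ 𝒟. Define A₂ := ∑_{Q⊆Q₀} α_Q ( σ(Q)^{-1} ∑_{Q'⊆Q} α_{Q'} )^{s−1} and A₃ := ∫_{Q₀} sup_{Q⊆Q₀} ( (1_Q(x)/σ(Q)) ∑_{Q'⊆Q} α_{Q'} )^s dσ(x). Then A₂ ≤ c(s)^{1/(s−1)} A₃, where c(s) = s for 1 < s ≤ 2 and c(s) = ( s(s−1)⋯(s−k) )^{(s−1)/(s−k−1)} for 2 < s < ∞, where k is the smallest integer greater than s − 2. -/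
open MeasureTheory ENNReal NNReal Set

noncomputable section

lemma mem_dyadicCube_iff (d : ℕ) (Q : ℤ × (Fin d → ℤ)) (x : Fin d → ℝ) :
    x ∈ dyadicCube d Q ↔ ∀ i, ⌊x i * (2 : ℝ) ^ Q.1⌋ = Q.2 i := by
  unfold dyadicCube
  simp only [mem_ofPred_eq, Int.floor_eq_iff]
  have h2 : (0 : ℝ) < (2 : ℝ) ^ Q.1 := by positivity
  refine forall_congr' fun i => ?_
  rw [zpow_neg, ← div_eq_mul_inv, ← div_eq_mul_inv, div_le_iff₀ h2, lt_div_iff₀ h2]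

lemma dyadicCube_subset_of_le (d : ℕ) (Q R : ℤ × (Fin d → ℤ)) (h : R.1 ≤ Q.1)
    (x : Fin d → ℝ) (hQ : x ∈ dyadicCube d Q) (hR : x ∈ dyadicCube d R) :
    dyadicCube d Q ⊆ dyadicCube d R := by
  intro y hy
  rw [mem_dyadicCube_iff] at *
  obtain ⟨n, hn⟩ := Int.le.dest h
  have key : ∀ z : ℝ, ⌊z * (2 : ℝ) ^ R.1⌋ = ⌊z * (2 : ℝ) ^ Q.1⌋ / ((2 ^ n : ℕ) : ℤ) := by
    intro z
    rw [← Int.floor_div_natCast]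
    congr 1
    rw [← hn, zpow_add₀ (by norm_num)]
    push_cast
    rw [zpow_natCast]
    field_simp
  intro i
  rw [key, hy i, ← hR i, key, hQ i]

lemma dyadicCube_corner (d : ℕ) (Q : ℤ × (Fin d → ℤ)) (c : ℝ) (h0 : 0 ≤ c) (h1 : c < 1) :
    (fun i => ((Q.2 i : ℝ) + c) * (2 : ℝ) ^ (-Q.1)) ∈ dyadicCube d Q := by
  have h2 : (0 : ℝ) < (2 : ℝ) ^ (-Q.1) := by positivity
  intro i
  constructor
  · exact mul_le_mul_of_nonneg_right (by linarith) h2.le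
  · exact mul_lt_mul_of_pos_right (by linarith) h2

lemma dyadicCube_scale_le (d : ℕ) (hd : 0 < d) (Q R : ℤ × (Fin d → ℤ))
    (h : dyadicCube d Q ⊆ dyadicCube d R) : R.1 ≤ Q.1 := by
  by_contra! hlt
  have a := (h (dyadicCube_corner d Q 0 le_rfl one_pos)) ⟨0, hd⟩
  have b := (h (dyadicCube_corner d Q (1/2) (by norm_num) (by norm_num))) ⟨0, hd⟩
  have c : (2 : ℝ) ^ (-R.1) * 2 ≤ (2 : ℝ) ^ (-Q.1) := by
    rw [← zpow_add_one₀ (by norm_num)]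
    exact zpow_le_zpow_right₀ (by norm_num) (by omega)
  have := a.1
  have := b.2
  nlinarith

lemma measurableSet_dyadicCube (d : ℕ) (Q : ℤ × (Fin d → ℤ)) :
    MeasurableSet (dyadicCube d Q) := by
  unfold dyadicCube
  measurability

lemma layer_finite (p : ℝ) (hp : 0 < p) (y : ℝ) (hy : 0 ≤ y) :
    ENNReal.ofReal y ^ p = ∫⁻ t in Ioi (0 : ℝ),
      ENNReal.ofReal (p * t ^ (p - 1)) * (if ENNReal.ofReal t < ENNReal.ofReal y then 1 else 0) := by
  have h1 : ∫⁻ t in Ioi (0 : ℝ),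
      ENNReal.ofReal (p * t ^ (p - 1)) * (if ENNReal.ofReal t < ENNReal.ofReal y then 1 else 0)
      = ∫⁻ t in Ioi (0 : ℝ), (Ioo 0 y).indicator (fun t => ENNReal.ofReal (p * t ^ (p - 1))) t := by
    refine setLIntegral_congr_fun measurableSet_Ioi fun t ht => ?_
    have ht' : 0 < t := ht
    by_cases hty : t < y
    · simp [indicator, ht', hty, ENNReal.ofReal_lt_ofReal_iff (ht'.trans hty)]
    · have : ¬ (ENNReal.ofReal t < ENNReal.ofReal y) := by
        simpa using ENNReal.ofReal_le_ofReal (not_lt.1 hty)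
      simp [indicator, hty, this]
  rw [h1, lintegral_indicator measurableSet_Ioo, Measure.restrict_restrict measurableSet_Ioo,
    inter_eq_left.2 (fun t ht => ht.1)]
  have hint : IntervalIntegrable (fun t : ℝ => p * t ^ (p - 1)) volume 0 y :=
    (intervalIntegral.intervalIntegrable_rpow' (by linarith)).const_mul p
  rw [← ofReal_integral_eq_lintegral_ofReal]
  · rw [← integral_Ioc_eq_integral_Ioo, ← intervalIntegral.integral_of_le hy,
      intervalIntegral.integral_const_mul, integral_rpow (Or.inl (by linarith)),
      ENNReal.ofReal_rpow_of_nonneg hy hp.le]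
    congr 1
    rw [sub_add_cancel, Real.zero_rpow hp.ne']
    field_simp
    simp
  · exact ((intervalIntegrable_iff_integrableOn_Ioo_of_le hy).1 hint)
  · refine (ae_restrict_iff' measurableSet_Ioo).2 (ae_of_all _ fun t ht => ?_)
    have := ht.1
    simp only [Pi.zero_apply]
    positivity

lemma layer (p : ℝ) (hp : 0 < p) (y : ℝ≥0∞) :
    y ^ p = ∫⁻ t in Ioi (0 : ℝ),
      ENNReal.ofReal (p * t ^ (p - 1)) * (if ENNReal.ofReal t < y then 1 else 0) := by
  by_cases hy : y = ∞
  · subst hy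
    rw [ENNReal.top_rpow_of_pos hp]
    symm
    refine ENNReal.eq_top_of_forall_nnreal_le fun r => ?_
    have h := layer_finite p hp (((r + 1 : ℝ≥0) : ℝ) ^ (1 / p)) (by positivity)
    have e : ENNReal.ofReal (((r + 1 : ℝ≥0) : ℝ) ^ (1 / p)) ^ p = ((r + 1 : ℝ≥0) : ℝ≥0∞) := by
      rw [ENNReal.ofReal_rpow_of_nonneg (by positivity) hp.le, ← Real.rpow_mul (by positivity),
        one_div_mul_cancel hp.ne', Real.rpow_one, ENNReal.ofReal_coe_nnreal]
    rw [e] at h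
    calc (r : ℝ≥0∞) ≤ ((r + 1 : ℝ≥0) : ℝ≥0∞) := by exact_mod_cast (lt_add_one r).le
      _ = _ := h
      _ ≤ _ := by
        refine lintegral_mono fun t => ?_
        dsimp only
        gcongr
        split_ifs <;> simp_all
  · have := layer_finite p hp y.toReal ENNReal.toReal_nonneg
    rwa [ENNReal.ofReal_toReal hy] at this

lemma one_le_lemmaConst (s : ℝ) (hs : 1 < s) : 1 ≤ lemmaConst s := by
  unfold lemmaConst
  split_ifs with h
  · exact hs.le
  · push Not at h
    have hk : (⌈s - 2⌉₊ : ℝ) < s - 2 + 1 := Nat.ceil_lt_add_one (by linarith)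
    apply Real.one_le_rpow
    · refine Finset.prod_induction _ (fun y : ℝ => 1 ≤ y) (fun a b ha hb => one_le_mul_of_one_le_of_one_le ha hb) le_rfl ?_
      intro j hj
      have : (j : ℝ) ≤ ⌈s - 2⌉₊ := by exact_mod_cast Nat.lt_succ_iff.1 (Finset.mem_range.1 hj)
      linarith
    · apply div_nonneg <;> linarith

lemma weak_type (d : ℕ) (hd : 0 < d) (σ : Measure (Fin d → ℝ))
    (Q₀ : ℤ × (Fin d → ℤ))
    (α : ℤ × (Fin d → ℤ) → ℝ≥0)
    (m : {Q : ℤ × (Fin d → ℤ) // dyadicCube d Q ⊆ dyadicCube d Q₀} → ℝ≥0∞)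
    (hm : ∀ Q, m Q ≠ 0 → ∑' Q' : {Q' : ℤ × (Fin d → ℤ) // dyadicCube d Q' ⊆ dyadicCube d Q.1},
                    (α Q'.1 : ℝ≥0∞) ≤ m Q * σ (dyadicCube d Q.1)) (t : ℝ≥0∞) :
    ∑' Q, (α Q.1 : ℝ≥0∞) * (if t < m Q then 1 else 0) ≤
      ∫⁻ x in dyadicCube d Q₀, (⨆ Q, (dyadicCube d Q.1).indicator 1 x * m Q) *
        (if t < ⨆ Q, (dyadicCube d Q.1).indicator 1 x * m Q then 1 else 0) ∂σ := by
  classical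
  set T : Set {Q : ℤ × (Fin d → ℤ) // dyadicCube d Q ⊆ dyadicCube d Q₀} :=
    {R | t < m R ∧ ∀ R', t < m R' → (dyadicCube d R'.1 ∩ dyadicCube d R.1).Nonempty →
      R.1.1 ≤ R'.1.1} with hT
  have hex : ∀ Q, t < m Q → ∃ R ∈ T, dyadicCube d Q.1 ⊆ dyadicCube d R.1 := by
    intro Q hQ
    obtain ⟨R, ⟨hR1, hR2⟩, hmin⟩ := WellFounded.has_min
      (InvImage.wf (fun R : {Q : ℤ × (Fin d → ℤ) // dyadicCube d Q ⊆ dyadicCube d Q₀} =>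
        (R.1.1 - Q₀.1).toNat) (Nat.lt_wfRel.wf))
      {R | t < m R ∧ dyadicCube d Q.1 ⊆ dyadicCube d R.1} ⟨Q, hQ, subset_rfl⟩
    refine ⟨R, ⟨hR1, ?_⟩, hR2⟩
    rintro R' hR' ⟨x, hx1, hx2⟩
    by_contra! hlt
    have hsub := dyadicCube_subset_of_le d R.1 R'.1 hlt.le x hx2 hx1
    refine hmin R' ⟨hR', hR2.trans hsub⟩ ?_
    have h1 := dyadicCube_scale_le d hd _ _ R.2
    have h2 := dyadicCube_scale_le d hd _ _ R'.2
    change (R'.1.1 - Q₀.1).toNat < (R.1.1 - Q₀.1).toNat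
    omega
  have huniq : ∀ R ∈ T, ∀ R' ∈ T, ∀ x, x ∈ dyadicCube d R.1 → x ∈ dyadicCube d R'.1 → R = R' := by
    rintro R hR R' hR' x hx hx'
    have e : R.1.1 = R'.1.1 :=
      le_antisymm (hR.2 R' hR'.1 ⟨x, hx', hx⟩) (hR'.2 R hR.1 ⟨x, hx, hx'⟩)
    rw [mem_dyadicCube_iff] at hx hx'
    apply Subtype.ext
    apply Prod.ext e
    funext i
    rw [← hx i, ← hx' i, e]
  calc ∑' Q, (α Q.1 : ℝ≥0∞) * (if t < m Q then 1 else 0)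
      ≤ ∑' Q : {Q : ℤ × (Fin d → ℤ) // dyadicCube d Q ⊆ dyadicCube d Q₀}, 
          ∑' R, if R ∈ T ∧ dyadicCube d Q.1 ⊆ dyadicCube d R.1 then (α Q.1 : ℝ≥0∞) else 0 := by
        refine ENNReal.tsum_le_tsum fun Q => ?_
        split_ifs with h
        · obtain ⟨R, hR, hQR⟩ := hex Q h
          refine le_trans ?_ (ENNReal.le_tsum R)
          simp [hR, hQR]
        · simp
    _ = ∑' R, ∑' Q : {Q : ℤ × (Fin d → ℤ) // dyadicCube d Q ⊆ dyadicCube d Q₀}, 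
          if R ∈ T ∧ dyadicCube d Q.1 ⊆ dyadicCube d R.1 then (α Q.1 : ℝ≥0∞) else 0 :=
        ENNReal.tsum_comm
    _ ≤ ∑' R, ∫⁻ x in dyadicCube d Q₀,
          (dyadicCube d R.1).indicator (fun _ => if R ∈ T then m R else 0) x ∂σ := by
        refine ENNReal.tsum_le_tsum fun R => ?_
        rw [lintegral_indicator_const (measurableSet_dyadicCube d R.1),
          Measure.restrict_apply (measurableSet_dyadicCube d R.1), inter_eq_left.2 R.2]
        by_cases hR : R ∈ T
        · simp only [hR, true_and, if_true]
          refine le_trans ?_ (hm R (ne_bot_of_gt hR.1))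
          have e1 := tsum_subtype {Q | dyadicCube d Q ⊆ dyadicCube d Q₀}
            (fun Q : ℤ × (Fin d → ℤ) =>
              if dyadicCube d Q ⊆ dyadicCube d R.1 then (α Q : ℝ≥0∞) else 0)
          have e2 := tsum_subtype {Q | dyadicCube d Q ⊆ dyadicCube d R.1}
            (fun Q : ℤ × (Fin d → ℤ) => (α Q : ℝ≥0∞))
          refine le_trans (le_of_eq e1) (le_trans ?_ (le_of_eq e2.symm))
          refine ENNReal.tsum_le_tsum fun Q => ?_
          simp only [indicator, mem_ofPred_eq]
          split_ifs <;> simp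
        · simp [hR]
    _ = ∫⁻ x in dyadicCube d Q₀, ∑' R,
          (dyadicCube d R.1).indicator (fun _ => if R ∈ T then m R else 0) x ∂σ := by
        rw [lintegral_tsum]
        intro R
        exact (measurable_const.indicator (measurableSet_dyadicCube d R.1)).aemeasurable
    _ ≤ _ := by
        refine lintegral_mono fun x => ?_
        dsimp only
        by_cases hx : ∃ R ∈ T, x ∈ dyadicCube d R.1
        · obtain ⟨R, hR, hxR⟩ := hx
          rw [tsum_eq_single R]
          · have hle : m R ≤ ⨆ Q, (dyadicCube d Q.1).indicator 1 x * m Q := by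
              refine le_trans ?_ (le_iSup _ R)
              simp [hxR]
            rw [if_pos (hR.1.trans_le hle)]
            simpa [hxR, hR] using hle
          · intro R' hne
            by_cases h1 : x ∈ dyadicCube d R'.1
            · have : R' ∉ T := fun h => hne (huniq R' h R hR x h1 hxR)
              simp [this]
            · simp [h1]
        · push Not at hx
          have : ∀ R : {Q : ℤ × (Fin d → ℤ) // dyadicCube d Q ⊆ dyadicCube d Q₀}, 
            (dyadicCube d R.1).indicator (fun _ => if R ∈ T then m R else 0) x = 0 := by
            intro R
            by_cases hR : R ∈ T
            · simp [hx R hR]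
            · simp [hR]
          simp [this]

/-- The estimate `A₂ ≤ c(s)^{1/(s-1)} A₃` of Lemma 2.1 (with the convention
that terms with `σ(Q) = 0` vanish). -/
theorem A2_le_A3
    (d : ℕ) (hd : 0 < d) (σ : Measure (Fin d → ℝ))
    (hσ : ∀ Q, σ (dyadicCube d Q) ≠ ∞)
    (s : ℝ) (hs : 1 < s)
    (α : ℤ × (Fin d → ℤ) → ℝ≥0)
    (Q₀ : ℤ × (Fin d → ℤ)) :
    (∑' Q : {Q : ℤ × (Fin d → ℤ) // dyadicCube d Q ⊆ dyadicCube d Q₀},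
        (α Q.1 : ℝ≥0∞) *
          (if σ (dyadicCube d Q.1) = 0 then 0
            else (σ (dyadicCube d Q.1))⁻¹ *
              ∑' Q' : {Q' : ℤ × (Fin d → ℤ) // dyadicCube d Q' ⊆ dyadicCube d Q.1},
                (α Q'.1 : ℝ≥0∞)) ^ (s - 1)) ≤
      ENNReal.ofReal (lemmaConst s ^ (1 / (s - 1))) *
        ∫⁻ x in dyadicCube d Q₀,
          ⨆ Q : {Q : ℤ × (Fin d → ℤ) // dyadicCube d Q ⊆ dyadicCube d Q₀},
            ((dyadicCube d Q.1).indicator 1 x *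
              (if σ (dyadicCube d Q.1) = 0 then 0
                else (σ (dyadicCube d Q.1))⁻¹ *
                  ∑' Q' : {Q' : ℤ × (Fin d → ℤ) // dyadicCube d Q' ⊆ dyadicCube d Q.1},
                    (α Q'.1 : ℝ≥0∞))) ^ s ∂σ := by
  have hp : 0 < s - 1 := by linarith
  have hC : 1 ≤ ENNReal.ofReal (lemmaConst s ^ (1 / (s - 1))) := by
    rw [ENNReal.one_le_ofReal]
    exact Real.one_le_rpow (one_le_lemmaConst s hs) (by positivity)
  refine le_trans ?_ (le_mul_of_one_le_left zero_le hC)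
  set m : {Q : ℤ × (Fin d → ℤ) // dyadicCube d Q ⊆ dyadicCube d Q₀} → ℝ≥0∞ := fun Q =>
    (if σ (dyadicCube d Q.1) = 0 then 0
                else (σ (dyadicCube d Q.1))⁻¹ *
                  ∑' Q' : {Q' : ℤ × (Fin d → ℤ) // dyadicCube d Q' ⊆ dyadicCube d Q.1},
                    (α Q'.1 : ℝ≥0∞)) with hmdef
  have hm : ∀ Q, m Q ≠ 0 →
      ∑' Q' : {Q' : ℤ × (Fin d → ℤ) // dyadicCube d Q' ⊆ dyadicCube d Q.1},
                    (α Q'.1 : ℝ≥0∞) ≤ m Q * σ (dyadicCube d Q.1) := by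
    intro Q hQ
    by_cases h0 : σ (dyadicCube d Q.1) = 0
    · simp [hmdef, h0] at hQ
    · simp only [hmdef, h0, if_false]
      rw [mul_comm, ← mul_assoc, ENNReal.mul_inv_cancel h0 (hσ _), one_mul]
  change ∑' Q : {Q : ℤ × (Fin d → ℤ) // dyadicCube d Q ⊆ dyadicCube d Q₀},
        (α Q.1 : ℝ≥0∞) * m Q ^ (s - 1) ≤ ∫⁻ x in dyadicCube d Q₀,
          ⨆ Q, ((dyadicCube d Q.1).indicator 1 x * m Q) ^ s ∂σ
  clear_value m
  set M : (Fin d → ℝ) → ℝ≥0∞ := fun x => ⨆ Q, (dyadicCube d Q.1).indicator 1 x * m Q with hM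
  have hMm : Measurable M := by
    refine Measurable.iSup fun Q => ?_
    exact (measurable_one.indicator (measurableSet_dyadicCube d Q.1)).mul_const _
  have hw : Measurable fun t : ℝ => ENNReal.ofReal ((s - 1) * t ^ (s - 1 - 1)) := by fun_prop
  have hfin : IsFiniteMeasure (σ.restrict (dyadicCube d Q₀)) :=
    ⟨by simpa using (hσ Q₀).lt_top⟩
  calc ∑' Q : {Q : ℤ × (Fin d → ℤ) // dyadicCube d Q ⊆ dyadicCube d Q₀},
        (α Q.1 : ℝ≥0∞) * m Q ^ (s - 1)
      = ∑' Q : {Q : ℤ × (Fin d → ℤ) // dyadicCube d Q ⊆ dyadicCube d Q₀},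
        ∫⁻ t in Ioi (0 : ℝ), (α Q.1 : ℝ≥0∞) * (ENNReal.ofReal ((s - 1) * t ^ (s - 1 - 1)) *
          (if ENNReal.ofReal t < m Q then 1 else 0)) := by
        refine tsum_congr fun Q => ?_
        rw [lintegral_const_mul' _ _ ENNReal.coe_ne_top, ← layer _ hp]
    _ = ∫⁻ t in Ioi (0 : ℝ), ∑' Q : {Q : ℤ × (Fin d → ℤ) // dyadicCube d Q ⊆ dyadicCube d Q₀},
         (α Q.1 : ℝ≥0∞) * (ENNReal.ofReal ((s - 1) * t ^ (s - 1 - 1)) *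
          (if ENNReal.ofReal t < m Q then 1 else 0)) := by
        rw [lintegral_tsum]
        intro Q
        refine (Measurable.const_mul (hw.mul ?_) _).aemeasurable
        exact Measurable.ite (measurableSet_lt ENNReal.measurable_ofReal measurable_const)
          measurable_const measurable_const
    _ ≤ ∫⁻ t in Ioi (0 : ℝ), ∫⁻ x in dyadicCube d Q₀, ENNReal.ofReal ((s - 1) * t ^ (s - 1 - 1)) *
          (M x * (if ENNReal.ofReal t < M x then 1 else 0)) ∂σ := by
        refine lintegral_mono fun t => ?_
        dsimp only
        rw [lintegral_const_mul' _ _ ENNReal.ofReal_ne_top]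
        simp_rw [mul_left_comm _ (ENNReal.ofReal ((s - 1) * t ^ (s - 1 - 1)))]
        rw [ENNReal.tsum_mul_left]
        gcongr
        exact weak_type d hd σ Q₀ α m hm _
    _ = ∫⁻ x in dyadicCube d Q₀, ∫⁻ t in Ioi (0 : ℝ), ENNReal.ofReal ((s - 1) * t ^ (s - 1 - 1)) *
          (M x * (if ENNReal.ofReal t < M x then 1 else 0)) ∂volume ∂σ := by
        rw [lintegral_lintegral_swap]
        refine Measurable.aemeasurable ?_
        refine (hw.comp measurable_fst).mul ((hMm.comp measurable_snd).mul ?_)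
        exact Measurable.ite (measurableSet_lt (ENNReal.measurable_ofReal.comp measurable_fst)
          (hMm.comp measurable_snd)) measurable_const measurable_const
    _ = ∫⁻ x in dyadicCube d Q₀, M x ^ s ∂σ := by
        refine lintegral_congr fun x => ?_
        simp_rw [mul_left_comm _ (M x)]
        rw [lintegral_const_mul, ← layer _ hp]
        · conv_rhs => rw [← add_sub_cancel 1 s, ENNReal.rpow_add_of_nonneg _ _ zero_le_one hp.le,
            ENNReal.rpow_one]
        · exact hw.mul (Measurable.ite (measurableSet_lt ENNReal.measurable_ofReal measurable_const)
            measurable_const measurable_const)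
    _ ≤ _ := by
        refine lintegral_mono fun x => ?_
        have := (ENNReal.orderIsoRpow s (by linarith)).map_iSup
          (fun Q => (dyadicCube d Q.1).indicator 1 x * m Q)
        simp only [ENNReal.orderIsoRpow_apply] at this
        exact this.le


end
end
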